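/- For every d ≥ 1, t > 0, s > 0 and multi-indices α, γ ∈ ℕ^d: ∫_{ℝ^d} ∫_{ℝ^d} (H_α^{(t)}(w) + ⟨∇H_α^{(t)}(w), z⟩) · (H_γ^{(t)}(w) + ⟨∇H_γ^{(t)}(w), z⟩) dν_s(z) dν_t(w) equals 1 + |α|·s/t if α = γ, and equals 0 if α ≠ γ. -/

import Mathlib

open MeasureTheory ProbabilityTheory

/-- The centered Gaussian product measure `ν_t` on `Fin d → ℝ` with variance `t` per coordinate. -/
noncomputable def gaussPi (d : ℕ) (t : ℝ) : Measure (Fin d → ℝ) :=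
  Measure.pi fun _ => gaussianReal 0 t.toNNReal

/-- Normalized generalized Hermite polynomial `H_n^{(t)}(y) = H_n(y/√t)/√(n!)`,
where `H_n` is the probabilists' Hermite polynomial. -/
noncomputable def Hgen (t : ℝ) (n : ℕ) (y : ℝ) : ℝ :=
  Polynomial.aeval (y / Real.sqrt t) (Polynomial.hermite n) / Real.sqrt (Nat.factorial n)

/-- Tensorized Hermite polynomial `H_α^{(t)}(y) = ∏_j H_{α_j}^{(t)}(y_j)`. -/
noncomputable def HgenMulti (d : ℕ) (t : ℝ) (α : Fin d → ℕ) (y : Fin d → ℝ) : ℝ :=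
  ∏ j, Hgen t (α j) (y j)

/-- Partial derivative of `f : ℝ^d → ℝ` in the `j`-th coordinate at `y`. -/
noncomputable def pd (d : ℕ) (f : (Fin d → ℝ) → ℝ) (j : Fin d) (y : Fin d → ℝ) : ℝ :=
  deriv (fun s => f (Function.update y j s)) (y j)

/-!
Integrating out `z` first turns the left-hand side into
`∫ H_α H_γ dν_t + s ∑ j, ∫ ∂_j H_α ∂_j H_γ dν_t`, because the coordinates of `z` are centered and
uncorrelated with variance `s`. Differentiation lowers the Hermite index,
`∂_j H_α = √(α_j / t) H_{α - e_j}`, so both terms are evaluated by orthonormality of the `H_α` under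
`ν_t`. Orthonormality is tensorized from dimension one, where Stein's identity makes the operator
`X - D`, which raises the Hermite index, the adjoint of the derivative `D` under the standard
Gaussian.
-/

open Polynomial
open scoped NNReal

section GaussianReal

variable {μ : ℝ} {v : ℝ≥0}

lemma hasDerivAt_gaussianPDFReal (μ : ℝ) (v : ℝ≥0) (x : ℝ) :
    HasDerivAt (gaussianPDFReal μ v) (-((x - μ) / v) * gaussianPDFReal μ v x) x := by
  have h_exponent : HasDerivAt (fun y : ℝ ↦ -(y - μ) ^ 2 / (2 * v)) (-((x - μ) / v)) x := by
    refine ((((hasDerivAt_id x).sub_const μ).pow 2).neg.div_const (2 * (v : ℝ))).congr_deriv ?_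
    simp only [id, Nat.cast_ofNat]
    ring
  rw [gaussianPDFReal_def]
  refine (h_exponent.exp.const_mul _).congr_deriv ?_
  ring

lemma integrable_gaussianReal_iff {E : Type*} [NormedAddCommGroup E] [NormedSpace ℝ E]
    {f : ℝ → E} (hv : v ≠ 0) :
    Integrable f (gaussianReal μ v) ↔ Integrable fun x ↦ gaussianPDFReal μ v x • f x := by
  rw [gaussianReal_of_var_ne_zero _ hv, integrable_withDensity_iff_integrable_smul'
    (measurable_gaussianPDF _ _) (ae_of_all _ fun _ ↦ gaussianPDF_lt_top)]
  simp only [toReal_gaussianPDF]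

theorem integral_sub_mul_gaussianReal {f f' : ℝ → ℝ} (hf : ∀ x, HasDerivAt f (f' x) x)
    (hf_int : Integrable f (gaussianReal μ v)) (hf'_int : Integrable f' (gaussianReal μ v))
    (hxf_int : Integrable (fun x ↦ (x - μ) * f x) (gaussianReal μ v)) :
    ∫ x, (x - μ) * f x ∂gaussianReal μ v = v * ∫ x, f' x ∂gaussianReal μ v := by
  obtain rfl | hv := eq_or_ne v 0
  · simp
  have hv' : (v : ℝ) ≠ 0 := NNReal.coe_ne_zero.mpr hv
  have h_deriv (x : ℝ) : HasDerivAt (fun x ↦ gaussianPDFReal μ v x * (v * f x))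
      (gaussianPDFReal μ v x • (v * f' x - (x - μ) * f x)) x := by
    refine ((hasDerivAt_gaussianPDFReal μ v x).mul ((hf x).const_mul (v : ℝ))).congr_deriv ?_
    rw [smul_eq_mul]
    field_simp
    ring
  have h_zero : ∫ x, (v * f' x - (x - μ) * f x) ∂gaussianReal μ v = 0 := by
    rw [integral_gaussianReal_eq_integral_smul hv]
    exact integral_eq_zero_of_hasDerivAt_of_integrable h_deriv
      ((integrable_gaussianReal_iff hv).mp ((hf'_int.const_mul _).sub hxf_int))
      ((integrable_gaussianReal_iff hv).mp (hf_int.const_mul _))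
  rw [integral_sub (hf'_int.const_mul _) hxf_int, integral_const_mul] at h_zero
  exact (sub_eq_zero.mp h_zero).symm

lemma integrable_aeval_gaussianReal {R : Type*} [CommSemiring R] [Algebra R ℝ] (p : R[X]) :
    Integrable (fun x : ℝ ↦ aeval x p) (gaussianReal μ v) := by
  induction p using Polynomial.induction_on' with
  | add p q hp hq => simpa only [map_add] using hp.fun_add hq
  | monomial n a =>
    have h_pow : Integrable (fun x : ℝ ↦ x ^ n) (gaussianReal μ v) :=
      (integrable_norm_iff (by fun_prop)).mp <| by
        simpa only [norm_pow] using! (memLp_id_gaussianReal (n : ℝ≥0)).integrable_norm_pow'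
    simpa only [aeval_monomial] using h_pow.const_mul (algebraMap R ℝ a)

lemma measurePreserving_div_sqrt_gaussianReal {t : ℝ} (ht : 0 < t) :
    MeasurePreserving (· / √t) (gaussianReal 0 t.toNNReal) (gaussianReal 0 1) where
  measurable := by fun_prop
  map_eq := by
    rw [gaussianReal_map_div_const, zero_div]
    congr 1
    ext
    simp [Real.sq_sqrt ht.le, ht.le, ht.ne']

end GaussianReal

section Hermite

lemma derivative_hermite_succ (n : ℕ) :
    derivative (hermite (n + 1)) = ((n + 1 : ℕ) : ℤ[X]) * hermite n := by
  induction n with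
  | zero => simp [hermite_succ]
  | succ n ih =>
    rw [hermite_succ (n + 1), derivative_sub, derivative_mul, ih, derivative_X,
      derivative_natCast_mul, hermite_succ n]
    push_cast
    ring

lemma integral_aeval_hermite_succ_mul (n : ℕ) (q : ℤ[X]) :
    ∫ x : ℝ, aeval x (hermite (n + 1) * q) ∂gaussianReal 0 1 =
      ∫ x : ℝ, aeval x (hermite n * derivative q) ∂gaussianReal 0 1 := by
  have h_split : hermite (n + 1) * q - hermite n * derivative q =
      X * (hermite n * q) - derivative (hermite n * q) := by
    rw [hermite_succ, derivative_mul]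
    ring
  have h_int (p : ℤ[X]) : Integrable (fun x : ℝ ↦ aeval x p) (gaussianReal 0 1) :=
    integrable_aeval_gaussianReal p
  have h_stein : ∫ x : ℝ, aeval x (X * (hermite n * q)) ∂gaussianReal 0 1 =
      ∫ x : ℝ, aeval x (derivative (hermite n * q)) ∂gaussianReal 0 1 := by
    have h_X_mul (x : ℝ) : aeval x (X * (hermite n * q)) = (x - 0) * aeval x (hermite n * q) := by
      rw [map_mul, aeval_X, sub_zero]
    simp only [h_X_mul]
    simpa only [NNReal.coe_one, one_mul] using
      integral_sub_mul_gaussianReal (hermite n * q).hasDerivAt_aeval (h_int _) (h_int _)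
        ((h_int _).congr (ae_of_all _ h_X_mul))
  rw [← sub_eq_zero, ← integral_sub (h_int _) (h_int _)]
  simp only [← map_sub, h_split]
  simp only [map_sub]
  rw [integral_sub (h_int _) (h_int _), h_stein, sub_self]

theorem integral_aeval_hermite_mul_hermite (m n : ℕ) :
    ∫ x : ℝ, aeval x (hermite m * hermite n) ∂gaussianReal 0 1 =
      if m = n then (n.factorial : ℝ) else 0 := by
  induction m generalizing n with
  | zero =>
    cases n with
    | zero => simp
    | succ n => rw [mul_comm, integral_aeval_hermite_succ_mul]; simp
  | succ m ih =>
    rw [integral_aeval_hermite_succ_mul]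
    cases n with
    | zero => simp
    | succ n =>
      simp only [derivative_hermite_succ, mul_left_comm (hermite m), map_mul (aeval _) (Nat.cast _),
        map_natCast, integral_const_mul, ih]
      simp [Nat.factorial_succ]

end Hermite

section Hgen

variable {t : ℝ}

lemma Hgen_mul_Hgen (t : ℝ) (m n : ℕ) (y : ℝ) :
    Hgen t m y * Hgen t n y =
      aeval (y / √t) (hermite m * hermite n) / (√m.factorial * √n.factorial) := by
  rw [Hgen, Hgen, map_mul, div_mul_div_comm]

lemma integrable_Hgen_mul_Hgen (ht : 0 < t) (m n : ℕ) :
    Integrable (fun y ↦ Hgen t m y * Hgen t n y) (gaussianReal 0 t.toNNReal) := by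
  simp only [Hgen_mul_Hgen]
  exact ((measurePreserving_div_sqrt_gaussianReal ht).integrable_comp_of_integrable
    (integrable_aeval_gaussianReal (hermite m * hermite n))).div_const _

theorem integral_Hgen_mul_Hgen (ht : 0 < t) (m n : ℕ) :
    ∫ y, Hgen t m y * Hgen t n y ∂gaussianReal 0 t.toNNReal = if m = n then 1 else 0 := by
  have h_embed : MeasurableEmbedding (· / √t) := by
    simpa only [div_eq_mul_inv] using
      measurableEmbedding_mulRight₀ (inv_ne_zero (Real.sqrt_ne_zero'.mpr ht))
  simp only [Hgen_mul_Hgen, integral_div]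
  rw [(measurePreserving_div_sqrt_gaussianReal ht).integral_comp h_embed
    (fun x ↦ aeval x (hermite m * hermite n)), integral_aeval_hermite_mul_hermite]
  split_ifs with hmn
  · rw [hmn, Real.mul_self_sqrt (by positivity), div_self (by positivity)]
  · rw [zero_div]

lemma deriv_Hgen (t : ℝ) (n : ℕ) (y : ℝ) :
    deriv (Hgen t n) y = √n / √t * Hgen t (n - 1) y := by
  have h_chain : HasDerivAt (Hgen t n)
      (aeval (y / √t) (derivative (hermite n)) * (1 / √t) / √n.factorial) y :=
    (((hermite n).hasDerivAt_aeval (y / √t)).comp y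
      ((hasDerivAt_id y).div_const _)).div_const _
  rw [h_chain.deriv]
  cases n with
  | zero => simp
  | succ n =>
    have h_sqrt : ((n + 1 : ℕ) : ℝ) / √((n + 1).factorial) = √(n + 1 : ℕ) / √n.factorial := by
      rw [Nat.factorial_succ, Nat.cast_mul, Real.sqrt_mul (by positivity), ← div_div,
        Real.div_sqrt]
    calc aeval (y / √t) (derivative (hermite (n + 1))) * (1 / √t) / √((n + 1).factorial)
        = ((n + 1 : ℕ) : ℝ) / √((n + 1).factorial) / √t * aeval (y / √t) (hermite n) := by
          rw [derivative_hermite_succ, map_mul, map_natCast]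
          ring
      _ = √(n + 1 : ℕ) / √t * Hgen t (n + 1 - 1) y := by
          rw [h_sqrt, Nat.add_sub_cancel, Hgen]
          ring

end Hgen

section HgenMulti

variable {d : ℕ} {t : ℝ}

lemma integrable_HgenMulti_mul_HgenMulti (ht : 0 < t) (α γ : Fin d → ℕ) :
    Integrable (fun w ↦ HgenMulti d t α w * HgenMulti d t γ w) (gaussPi d t) := by
  simp only [HgenMulti, ← Finset.prod_mul_distrib]
  exact Integrable.fintype_prod (f := fun j y ↦ Hgen t (α j) y * Hgen t (γ j) y)
    fun j ↦ integrable_Hgen_mul_Hgen ht (α j) (γ j)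

theorem integral_HgenMulti_mul_HgenMulti (ht : 0 < t) (α γ : Fin d → ℕ) :
    ∫ w, HgenMulti d t α w * HgenMulti d t γ w ∂gaussPi d t = if α = γ then 1 else 0 := by
  simp only [HgenMulti, ← Finset.prod_mul_distrib, gaussPi]
  rw [integral_fintype_prod_eq_prod fun j y ↦ Hgen t (α j) y * Hgen t (γ j) y]
  simp only [integral_Hgen_mul_Hgen ht, Finset.prod_ite_zero, Finset.prod_const_one,
    Finset.mem_univ, true_imp_iff, funext_iff]

lemma pd_prod (f : Fin d → ℝ → ℝ) (j : Fin d) (w : Fin d → ℝ) :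
    pd d (fun y ↦ ∏ i, f i (y i)) j w =
      deriv (f j) (w j) * ∏ i ∈ Finset.univ.erase j, f i (w i) := by
  have h_split (x : ℝ) : ∏ i, f i (Function.update w j x i) =
      f j x * ∏ i ∈ Finset.univ.erase j, f i (w i) := by
    rw [← Finset.mul_prod_erase _ _ (Finset.mem_univ j), Function.update_self]
    congr 1
    refine Finset.prod_congr rfl fun i hi ↦ ?_
    rw [Function.update_of_ne (Finset.ne_of_mem_erase hi)]
  simp only [pd, h_split, deriv_mul_const_field]

lemma pd_HgenMulti (t : ℝ) (α : Fin d → ℕ) (j : Fin d) (w : Fin d → ℝ) :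
    pd d (HgenMulti d t α) j w = √(α j) / √t * HgenMulti d t (α - Pi.single j 1) w := by
  have h_lower : HgenMulti d t (α - Pi.single j 1) w =
      Hgen t (α j - 1) (w j) * ∏ i ∈ Finset.univ.erase j, Hgen t (α i) (w i) := by
    rw [HgenMulti, ← Finset.mul_prod_erase _ _ (Finset.mem_univ j), Pi.sub_apply,
      Pi.single_eq_same]
    congr 1
    refine Finset.prod_congr rfl fun i hi ↦ ?_
    rw [Pi.sub_apply, Pi.single_eq_of_ne (Finset.ne_of_mem_erase hi), Nat.sub_zero]
  rw [h_lower, ← mul_assoc, ← deriv_Hgen]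
  exact pd_prod (fun i ↦ Hgen t (α i)) j w

lemma pd_HgenMulti_mul_pd_HgenMulti (t : ℝ) (α γ : Fin d → ℕ) (j : Fin d) (w : Fin d → ℝ) :
    pd d (HgenMulti d t α) j w * pd d (HgenMulti d t γ) j w =
      √(α j) / √t * (√(γ j) / √t) *
        (HgenMulti d t (α - Pi.single j 1) w * HgenMulti d t (γ - Pi.single j 1) w) := by
  rw [pd_HgenMulti, pd_HgenMulti, mul_mul_mul_comm]

lemma integrable_pd_HgenMulti_mul_pd_HgenMulti (ht : 0 < t) (α γ : Fin d → ℕ) (j : Fin d) :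
    Integrable (fun w ↦ pd d (HgenMulti d t α) j w * pd d (HgenMulti d t γ) j w)
      (gaussPi d t) := by
  simp only [pd_HgenMulti_mul_pd_HgenMulti]
  exact (integrable_HgenMulti_mul_HgenMulti ht _ _).const_mul _

theorem integral_pd_HgenMulti_mul_pd_HgenMulti (ht : 0 < t) (α γ : Fin d → ℕ) (j : Fin d) :
    ∫ w, pd d (HgenMulti d t α) j w * pd d (HgenMulti d t γ) j w ∂gaussPi d t =
      if α = γ then α j / t else 0 := by
  simp only [pd_HgenMulti_mul_pd_HgenMulti, integral_const_mul,
    integral_HgenMulti_mul_HgenMulti ht]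
  obtain rfl | hne := eq_or_ne α γ
  · rw [if_pos rfl, if_pos rfl, mul_one, div_mul_div_comm, Real.mul_self_sqrt (by positivity),
      Real.mul_self_sqrt ht.le]
  rw [if_neg hne]
  obtain hα | hα := eq_or_ne (α j) 0
  · simp [hα]
  obtain hγ | hγ := eq_or_ne (γ j) 0
  · simp [hγ]
  have single_le {β : Fin d → ℕ} (hβ : β j ≠ 0) : Pi.single j 1 ≤ β :=
    update_le_iff.mpr ⟨Nat.one_le_iff_ne_zero.mpr hβ, fun _ _ ↦ Nat.zero_le _⟩
  rw [if_neg fun h ↦ hne ((tsub_left_inj (single_le hα) (single_le hγ)).mp h), mul_zero]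

end HgenMulti

section Affine

variable {ι : Type*} [Fintype ι]

lemma integral_affine_mul_affine {Ω : Type*} {mΩ : MeasurableSpace Ω} {P : Measure Ω}
    [IsProbabilityMeasure P] {Z : ι → Ω → ℝ} (hZ : ∀ i, MemLp (Z i) 2 P)
    (hZ_mean : ∀ i, ∫ ω, Z i ω ∂P = 0) (a c : ℝ) (b e : ι → ℝ) :
    ∫ ω, (a + ∑ i, b i * Z i ω) * (c + ∑ i, e i * Z i ω) ∂P =
      a * c + ∑ i, ∑ j, b i * e j * cov[Z i, Z j; P] := by
  have h_memLp (b : ι → ℝ) : MemLp (fun ω ↦ ∑ i, b i * Z i ω) 2 P :=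
    memLp_finsetSum _ fun i _ ↦ (hZ i).const_mul (b i)
  have h_int (b : ι → ℝ) : Integrable (fun ω ↦ ∑ i, b i * Z i ω) P :=
    (h_memLp b).integrable one_le_two
  have h_mean (a : ℝ) (b : ι → ℝ) : ∫ ω, (a + ∑ i, b i * Z i ω) ∂P = a := by
    rw [integral_add (integrable_const a) (h_int b),
      integral_finsetSum _ fun i _ ↦ ((hZ i).const_mul (b i)).integrable one_le_two]
    simp [integral_const_mul, hZ_mean]
  have h_cov : cov[fun ω ↦ a + ∑ i, b i * Z i ω, fun ω ↦ c + ∑ i, e i * Z i ω; P] =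
      ∑ i, ∑ j, b i * e j * cov[Z i, Z j; P] := by
    rw [covariance_const_add_left (h_int b), covariance_const_add_right (h_int e),
      covariance_fun_sum_fun_sum (fun i ↦ (hZ i).const_mul (b i))
        (fun i ↦ (hZ i).const_mul (e i))]
    simp only [covariance_const_mul_left, covariance_const_mul_right, mul_assoc,
      mul_left_comm (e _)]
  have h_sub := covariance_eq_sub ((memLp_const a).add (h_memLp b))
    ((memLp_const c).add (h_memLp e))
  simp only [Pi.add_def, Pi.mul_def, h_mean] at h_sub
  linarith

lemma covariance_comp_eval_pi [DecidableEq ι] {Ω : ι → Type*} {mΩ : ∀ i, MeasurableSpace (Ω i)}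
    {μ : ∀ i, Measure (Ω i)} [∀ i, IsProbabilityMeasure (μ i)] {X : ∀ i, Ω i → ℝ}
    (hX : ∀ i, MemLp (X i) 2 (μ i)) (i j : ι) :
    cov[fun ω ↦ X i (ω i), fun ω ↦ X j (ω j); Measure.pi μ] =
      if i = j then Var[X i; μ i] else 0 := by
  have h_eval (i : ι) := measurePreserving_eval μ i
  have h_memLp (i : ι) : MemLp (fun ω ↦ X i (ω i)) 2 (Measure.pi μ) :=
    (hX i).comp_measurePreserving (h_eval i)
  split_ifs with hij
  · subst hij
    have h_meas : AEMeasurable (X i) ((Measure.pi μ).map (Function.eval i)) :=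
      (h_eval i).map_eq ▸ (hX i).aestronglyMeasurable.aemeasurable
    rw [covariance_self (h_memLp i).aestronglyMeasurable.aemeasurable, ← (h_eval i).map_eq,
      variance_map h_meas (h_eval i).aemeasurable]
    rfl
  · exact ((iIndepFun_pi fun i ↦ (hX i).aestronglyMeasurable.aemeasurable).indepFun
      hij).covariance_eq_zero (h_memLp i) (h_memLp j)

instance isProbabilityMeasure_gaussPi (d : ℕ) (t : ℝ) : IsProbabilityMeasure (gaussPi d t) := by
  unfold gaussPi
  infer_instance

lemma integral_affine_mul_affine_gaussPi {d : ℕ} {s : ℝ} (hs : 0 ≤ s) (a c : ℝ)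
    (b e : Fin d → ℝ) :
    ∫ z, (a + ∑ j, b j * z j) * (c + ∑ j, e j * z j) ∂gaussPi d s =
      a * c + s * ∑ j, b j * e j := by
  have h_memLp : MemLp id 2 (gaussianReal 0 s.toNNReal) := memLp_id_gaussianReal 2
  have h_eval_memLp (j : Fin d) : MemLp (fun z ↦ z j) 2 (gaussPi d s) :=
    h_memLp.comp_measurePreserving (measurePreserving_eval _ j)
  have h_mean (j : Fin d) : ∫ z, z j ∂gaussPi d s = 0 :=
    integral_eval.trans integral_id_gaussianReal
  have h_cov (i j : Fin d) :
      cov[fun z ↦ z i, fun z ↦ z j; gaussPi d s] = if i = j then s else 0 := by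
    simpa only [variance_id_gaussianReal, Real.coe_toNNReal s hs] using!
      covariance_comp_eval_pi (fun _ ↦ h_memLp) i j
  rw [integral_affine_mul_affine h_eval_memLp h_mean]
  simp only [h_cov, mul_ite, mul_zero, Finset.sum_ite_eq, Finset.mem_univ, if_true,
    ← Finset.sum_mul, mul_comm s]

end Affine

/-- Expectation of the entries of the gradient-enhanced Gram matrix:
`∫∫ (H_α(w) + ⟨∇H_α(w), z⟩)(H_γ(w) + ⟨∇H_γ(w), z⟩) dν_s(z) dν_t(w)` equals
`1 + |α|·s/t` if `α = γ` and `0` otherwise. -/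
theorem gram_entry_expectation (d : ℕ) (hd : 1 ≤ d) (t s : ℝ) (ht : 0 < t) (hs : 0 < s)
    (α γ : Fin d → ℕ) :
    ∫ w, (∫ z,
        (HgenMulti d t α w + ∑ j, pd d (HgenMulti d t α) j w * z j)
          * (HgenMulti d t γ w + ∑ j, pd d (HgenMulti d t γ) j w * z j)
        ∂(gaussPi d s)) ∂(gaussPi d t)
      = if α = γ then 1 + ((∑ j, α j : ℕ) : ℝ) * s / t else 0 := by
  simp only [integral_affine_mul_affine_gaussPi hs.le]
  rw [integral_add (integrable_HgenMulti_mul_HgenMulti ht α γ)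
      ((integrable_finsetSum _ fun j _ ↦
        integrable_pd_HgenMulti_mul_pd_HgenMulti ht α γ j).const_mul s),
    integral_const_mul,
    integral_finsetSum _ fun j _ ↦ integrable_pd_HgenMulti_mul_pd_HgenMulti ht α γ j]
  simp only [integral_HgenMulti_mul_HgenMulti ht, integral_pd_HgenMulti_mul_pd_HgenMulti ht]
  split_ifs
  · rw [← Finset.sum_div, Nat.cast_sum]
    ring
  · simp
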